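/- The triple (D(Ω), concatenation, {P_ω : ω ∈ Ω}) is the free Ω-operated monoid on the empty set. Precisely: for every monoid H and every family of maps α_ω : H → H (ω ∈ Ω), there exists a unique monoid homomorphism φ : D(Ω) → H such that φ(P_ω(w)) = α_ω(φ(w)) for every w ∈ D(Ω) and every ω ∈ Ω. -/

import Mathlib

/-- The left bracket letter `⌊_ω` as a one-letter word. -/
def lbr {Ω : Type*} (ω : Ω) : FreeMonoid (Ω ⊕ Ω) :=
  FreeMonoid.of (Sum.inl ω)

/-- The right bracket letter `⌋_ω` as a one-letter word. -/
def rbr {Ω : Type*} (ω : Ω) : FreeMonoid (Ω ⊕ Ω) :=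
  FreeMonoid.of (Sum.inr ω)

/-- The operator `P_ω` on the free monoid: `P_ω w = ⌊_ω w ⌋_ω`. -/
def Pop {Ω : Type*} (ω : Ω) (w : FreeMonoid (Ω ⊕ Ω)) : FreeMonoid (Ω ⊕ Ω) :=
  lbr ω * w * rbr ω

/-- `D(Ω)`: the set of `Ω`-decorated Dyck words, i.e. the smallest subset of the free monoid
on `{⌊_ω} ⊔ {⌋_ω}` containing `1`, closed under concatenation and all operators `P_ω`. -/
inductive IsDW (Ω : Type*) : FreeMonoid (Ω ⊕ Ω) → Prop
  | one : IsDW Ω 1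
  | mul {u v : FreeMonoid (Ω ⊕ Ω)} : IsDW Ω u → IsDW Ω v → IsDW Ω (u * v)
  | op (ω : Ω) {u : FreeMonoid (Ω ⊕ Ω)} : IsDW Ω u → IsDW Ω (Pop ω u)

/-- `D(Ω)` as a submonoid of the free monoid. -/
def DWsub (Ω : Type*) : Submonoid (FreeMonoid (Ω ⊕ Ω)) where
  carrier := {w | IsDW Ω w}
  one_mem' := IsDW.one
  mul_mem' := fun h1 h2 => IsDW.mul h1 h2

/-- The operator `P_ω` restricted to `D(Ω)`. -/
def PopSub {Ω : Type*} (ω : Ω) (w : DWsub Ω) : DWsub Ω :=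
  ⟨Pop ω w.1, IsDW.op ω w.2⟩

/-- One step of a stack machine evaluating bracket words in `H`. -/
def dwStep {Ω : Type*} {H : Type*} [Monoid H] (α : Ω → H → H) :
    H × List H → Ω ⊕ Ω → H × List H
  | (h, s), Sum.inl _ => (1, h :: s)
  | (h, []), Sum.inr _ => (h, [])
  | (h, g :: s), Sum.inr ω => (g * α ω h, s)

/-- Run the stack machine on a word. -/
def dwRun {Ω : Type*} {H : Type*} [Monoid H] (α : Ω → H → H)
    (w : FreeMonoid (Ω ⊕ Ω)) (x : H × List H) : H × List H :=
  (FreeMonoid.toList w).foldl (dwStep α) x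

theorem dwRun_mul {Ω : Type*} {H : Type*} [Monoid H] (α : Ω → H → H)
    (u v : FreeMonoid (Ω ⊕ Ω)) (x : H × List H) :
    dwRun α (u * v) x = dwRun α v (dwRun α u x) := by
  simp [dwRun, FreeMonoid.toList_mul, List.foldl_append]

theorem dwRun_Pop {Ω : Type*} {H : Type*} [Monoid H] (α : Ω → H → H)
    (ω : Ω) (u : FreeMonoid (Ω ⊕ Ω)) (h : H) (s : List H) :
    dwRun α (Pop ω u) (h, s) = dwStep α (dwRun α u (1, h :: s)) (Sum.inr ω) := by
  simp only [Pop, dwRun_mul]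
  rfl

theorem dwRun_spec {Ω : Type*} {H : Type*} [Monoid H] (α : Ω → H → H)
    {w : FreeMonoid (Ω ⊕ Ω)} (hw : IsDW Ω w) :
    ∀ (h : H) (s : List H), dwRun α w (h, s) = (h * (dwRun α w (1, [])).1, s) := by
  induction hw with
  | one => intro h s; simp [dwRun]
  | @mul u v _ _ hu hv =>
    intro h s
    rw [dwRun_mul, dwRun_mul, hu h s, hv, hu 1 [], hv (1 * _) []]
    simp [mul_assoc]
  | @op ω u _ hu =>
    intro h s
    rw [dwRun_Pop, dwRun_Pop, hu 1 (h :: s), hu 1 [1]]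
    simp [dwStep]

/-- `(D(Ω), concatenation, {P_ω})` is the free `Ω`-operated monoid on the empty set:
for every monoid `H` and family of maps `α_ω : H → H` there is a unique monoid homomorphism
`φ : D(Ω) → H` with `φ (P_ω w) = α_ω (φ w)` for all `w ∈ D(Ω)`, `ω ∈ Ω`. -/
theorem dyckWords_free_operated_monoid_on_empty
    (Ω : Type*) [Nonempty Ω]
    (H : Type*) [Monoid H] (α : Ω → H → H) :
    ∃! φ : DWsub Ω →* H,
      ∀ (ω : Ω) (w : DWsub Ω), φ (PopSub ω w) = α ω (φ w) := by
  refine ⟨{ toFun := fun w => (dwRun α w.1 (1, [])).1, map_one' := rfl, map_mul' := ?_ }, ?_, ?_⟩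
  · intro u v
    change (dwRun α (u.1 * v.1) (1, [])).1 = _
    rw [dwRun_mul, dwRun_spec α u.2, dwRun_spec α v.2]
  · intro ω w
    change (dwRun α (Pop ω w.1) (1, [])).1 = α ω (dwRun α w.1 (1, [])).1
    rw [dwRun_Pop, dwRun_spec α w.2]
    simp [dwStep]
  · intro ψ hψ
    ext ⟨w, hw⟩
    change ψ ⟨w, hw⟩ = (dwRun α w (1, [])).1
    have key : ∀ w (hw : IsDW Ω w), ψ ⟨w, hw⟩ = (dwRun α w (1, [])).1 := by
      intro w hw
      induction hw with
      | one => exact map_one ψ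
      | @mul u v hu hv ihu ihv =>
        have := map_mul ψ ⟨u, hu⟩ ⟨v, hv⟩
        rw [ihu, ihv] at this
        rw [dwRun_mul, dwRun_spec α hu, dwRun_spec α hv]
        refine this.trans ?_
        simp
      | @op ω u hu ih =>
        have := hψ ω ⟨u, hu⟩
        rw [ih] at this
        rw [dwRun_Pop, dwRun_spec α hu]
        refine this.trans ?_
        simp [dwStep]
    exact key w hw
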